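/- For every N ≥ 1, all r, s, q ∈ ℂ and all u, v ∈ ℂ^N, one has Σ_{α,β ∈ BC_N⁺} c_α c_β ⟨α,β⟩ (α(u)β(v) − α(v)β(u))² = 4q(r + 8s + 2(N−2)q) · Σ_{1≤i<j≤N} (u_i v_j − u_j v_i)², where ⟨α,β⟩ = Σ_{i=1}^N α_i β_i is the standard bilinear pairing of the coordinate vectors of α and β, and the sum is over all ordered pairs (α,β) of covectors of BC_N⁺(r,s,q). -/

import Mathlib

open Finset

noncomputable section

/-- Evaluation of a covector `α` on a vector `x` in `ℂ^N`. -/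
def ev {N : ℕ} (α x : Fin N → ℂ) : ℂ := ∑ i, α i * x i

/-- `(α ∧ β)(a, b) = α(a)β(b) - α(b)β(a)`. -/
def wedge {N : ℕ} (α β a b : Fin N → ℂ) : ℂ :=
  ev α a * ev β b - ev α b * ev β a

/-- The standard covector `e^i` of `(ℂ^N)^*`. -/
def esgl (N : ℕ) (i : Fin N) : Fin N → ℂ := Pi.single i 1

/-- The weighted sum `Σ_{α ∈ BC_N⁺} c_α f(α)` over the configuration `BC_N⁺(r,s,q)`,
whose covectors are `e^i` (weight `r`), `2e^i` (weight `s`) and `e^i ± e^j`, `i < j`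
(weight `q`). -/
def bcSum (N : ℕ) (r s q : ℂ) (f : (Fin N → ℂ) → ℂ) : ℂ :=
  (∑ i, r * f (esgl N i)) + (∑ i, s * f ((2 : ℂ) • esgl N i)) +
    ∑ p ∈ Finset.univ.filter (fun p : Fin N × Fin N => p.1 < p.2),
      (q * f (esgl N p.1 + esgl N p.2) + q * f (esgl N p.1 - esgl N p.2))

/-- indicator of `i < j` -/
def Lt01 {N : ℕ} (i j : Fin N) : ℂ := if i < j then 1 else 0

/-- indicator of `i = j` -/
def Eq01 {N : ℕ} (i j : Fin N) : ℂ := if i = j then 1 else 0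

/-- coordinates of `α ∧ e^i` -/
def Wc {N : ℕ} (u v α : Fin N → ℂ) (i : Fin N) : ℂ := ev α u * v i - ev α v * u i

lemma ev_esgl {N : ℕ} (i : Fin N) (x : Fin N → ℂ) : ev (esgl N i) x = x i := by
  simp [ev, esgl, Pi.single_apply]

lemma ev_add {N : ℕ} (α β x : Fin N → ℂ) : ev (α + β) x = ev α x + ev β x := by
  simp [ev, add_mul, Finset.sum_add_distrib]

lemma ev_sub {N : ℕ} (α β x : Fin N → ℂ) : ev (α - β) x = ev α x - ev β x := by
  simp [ev, sub_mul, Finset.sum_sub_distrib]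

lemma ev_smul {N : ℕ} (c : ℂ) (α x : Fin N → ℂ) : ev (c • α) x = c * ev α x := by
  simp [ev, mul_assoc, Finset.mul_sum]

lemma ev_comm {N : ℕ} (α x : Fin N → ℂ) : ev α x = ev x α := by
  simp [ev, mul_comm]

lemma esgl_apply {N : ℕ} (i j : Fin N) : esgl N i j = Eq01 j i := by
  simp [esgl, Pi.single_apply, Eq01]

lemma sum_lt {N : ℕ} (f : Fin N → Fin N → ℂ) :
    ∑ p ∈ Finset.univ.filter (fun p : Fin N × Fin N => p.1 < p.2), f p.1 p.2
      = ∑ k, ∑ l, Lt01 k l * f k l := by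
  rw [Finset.sum_filter, Fintype.sum_prod_type]
  simp [Lt01]

lemma sum_Eq01 {N : ℕ} (k : Fin N) (f : Fin N → ℂ) : ∑ i, Eq01 i k * f i = f k := by
  simp [Eq01]

lemma bcSum_eq (N : ℕ) (r s q : ℂ) (f : (Fin N → ℂ) → ℂ) :
    bcSum N r s q f = r * (∑ i, f (esgl N i)) + s * (∑ i, f ((2 : ℂ) • esgl N i)) +
      q * ∑ k, ∑ l, Lt01 k l * (f (esgl N k + esgl N l) + f (esgl N k - esgl N l)) := by
  rw [bcSum, ← sum_lt (fun k l => f (esgl N k + esgl N l) + f (esgl N k - esgl N l))]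
  simp only [Finset.mul_sum, mul_add]

/-- the second inner sum -/
def T2 {N : ℕ} (u v α : Fin N → ℂ) : ℂ :=
  ∑ i, ∑ j, Lt01 i j * (2 * α i * (Wc u v α i ^ 2 + Wc u v α j ^ 2)
    + 4 * α j * (Wc u v α i * Wc u v α j))

/-- the first inner sum -/
def T1 {N : ℕ} (u v α : Fin N → ℂ) : ℂ := ∑ i, α i * Wc u v α i ^ 2

lemma inner_eq {N : ℕ} (r s q : ℂ) (u v α : Fin N → ℂ) :
    bcSum N r s q (fun β => (∑ i, α i * β i) * wedge α β u v ^ 2)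
      = (r + 8 * s) * T1 u v α + q * T2 u v α := by
  change bcSum N r s q (fun β => ev α β * wedge α β u v ^ 2) = _
  have e1 : ∀ i, ev α (esgl N i) = α i := fun i => by rw [ev_comm, ev_esgl]
  have e2 : ∀ i, ev α ((2 : ℂ) • esgl N i) = 2 * α i := fun i => by
    rw [ev_comm, ev_smul, ev_esgl]
  have e3 : ∀ i j, ev α (esgl N i + esgl N j) = α i + α j := fun i j => by
    rw [ev_comm, ev_add, ev_esgl, ev_esgl]
  have e4 : ∀ i j, ev α (esgl N i - esgl N j) = α i - α j := fun i j => by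
    rw [ev_comm, ev_sub, ev_esgl, ev_esgl]
  rw [bcSum_eq]
  simp only [e1, e2, e3, e4, wedge, ev_add, ev_sub, ev_smul, ev_esgl, T1, T2, Wc]
  congr 1
  · simp only [Finset.mul_sum, ← Finset.sum_add_distrib]
    refine Finset.sum_congr rfl fun i _ => ?_
    ring
  · congr 1
    refine Finset.sum_congr rfl fun i _ => Finset.sum_congr rfl fun j _ => ?_
    ring

lemma T1_esgl {N : ℕ} (u v : Fin N → ℂ) (k : Fin N) : T1 u v (esgl N k) = 0 := by
  simp only [T1, Wc, esgl_apply, ev_esgl, sum_Eq01]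
  ring

lemma T1_smul {N : ℕ} (u v α : Fin N → ℂ) (c : ℂ) : T1 u v (c • α) = c ^ 3 * T1 u v α := by
  simp only [T1, Wc, ev_smul, Finset.mul_sum, Pi.smul_apply, smul_eq_mul]
  refine Finset.sum_congr rfl fun i _ => ?_
  ring

lemma T2_smul {N : ℕ} (u v α : Fin N → ℂ) (c : ℂ) : T2 u v (c • α) = c ^ 3 * T2 u v α := by
  simp only [T2, Wc, ev_smul, Finset.mul_sum, Pi.smul_apply, smul_eq_mul]
  refine Finset.sum_congr rfl fun i _ => Finset.sum_congr rfl fun j _ => ?_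
  ring

lemma T1_pm {N : ℕ} (u v : Fin N → ℂ) (k l : Fin N) :
    T1 u v (esgl N k + esgl N l) + T1 u v (esgl N k - esgl N l)
      = 2 * (u k * v l - u l * v k) ^ 2 := by
  simp only [T1, Wc, ev_add, ev_sub, ev_esgl, Pi.add_apply, Pi.sub_apply, esgl_apply, add_mul,
    sub_mul, Finset.sum_add_distrib, Finset.sum_sub_distrib, sum_Eq01]
  ring

lemma sum2_left {N : ℕ} (k : Fin N) (f : Fin N → Fin N → ℂ) :
    ∑ i, ∑ j, Eq01 i k * f i j = ∑ j, f k j := by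
  simp only [← Finset.mul_sum, sum_Eq01]

lemma sum2_right {N : ℕ} (k : Fin N) (f : Fin N → Fin N → ℂ) :
    ∑ i, ∑ j, Eq01 j k * f i j = ∑ i, f i k := by
  simp only [sum_Eq01]

lemma T2_esgl {N : ℕ} (u v : Fin N → ℂ) (k : Fin N) :
    T2 u v (esgl N k) = 2 * ∑ l, Lt01 k l * (u k * v l - u l * v k) ^ 2 := by
  simp only [T2, Wc, esgl_apply, ev_esgl]
  have h : ∀ i j : Fin N, Lt01 i j * (2 * Eq01 i k * ((u k * v i - v k * u i) ^ 2 +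
      (u k * v j - v k * u j) ^ 2) + 4 * Eq01 j k * ((u k * v i - v k * u i) *
      (u k * v j - v k * u j)))
      = Eq01 i k * (Lt01 i j * (2 * ((u k * v i - v k * u i) ^ 2 +
      (u k * v j - v k * u j) ^ 2))) + Eq01 j k * (Lt01 i j * (4 * ((u k * v i - v k * u i) *
      (u k * v j - v k * u j)))) := fun i j => by ring
  simp only [h, Finset.sum_add_distrib]
  rw [sum2_left k (fun i j => (Lt01 i j * (2 * ((u k * v i - v k * u i) ^ 2 +
      (u k * v j - v k * u j) ^ 2)))), sum2_right k (fun i j => (Lt01 i j *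
      (4 * ((u k * v i - v k * u i) * (u k * v j - v k * u j)))))]
  rw [← Finset.sum_add_distrib, Finset.mul_sum]
  refine Finset.sum_congr rfl fun i _ => ?_
  ring

/-- `w u v i j = u_i v_j - u_j v_i` -/
def ww {N : ℕ} (u v : Fin N → ℂ) (i j : Fin N) : ℂ := u i * v j - u j * v i

lemma T2_pm {N : ℕ} (u v : Fin N → ℂ) (k l : Fin N) :
    T2 u v (esgl N k + esgl N l) + T2 u v (esgl N k - esgl N l)
      = ∑ j, (Lt01 k j * (4 * (ww u v k l ^ 2 + ww u v k j ^ 2 + ww u v l j ^ 2))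
          + Lt01 l j * (8 * (ww u v k j * ww u v l j))
          + Lt01 j k * (8 * (ww u v l j * ww u v l k))
          + Lt01 j l * (8 * (ww u v l j * ww u v k l))) := by
  have h : T2 u v (esgl N k + esgl N l) + T2 u v (esgl N k - esgl N l) =
      ∑ i, ∑ j, (Eq01 i k * (Lt01 i j * (4 * (ww u v k i ^ 2 + ww u v l i ^ 2
          + ww u v k j ^ 2 + ww u v l j ^ 2)))
        + Eq01 i l * (Lt01 i j * (8 * (ww u v k i * ww u v l i + ww u v k j * ww u v l j)))
        + Eq01 j k * (Lt01 i j * (8 * (ww u v k i * ww u v k j + ww u v l i * ww u v l j)))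
        + Eq01 j l * (Lt01 i j * (8 * (ww u v k i * ww u v l j + ww u v l i * ww u v k j)))) := by
    simp only [T2, Wc, ev_add, ev_sub, ev_esgl, Pi.add_apply, Pi.sub_apply, esgl_apply,
      ← Finset.sum_add_distrib, ww]
    refine Finset.sum_congr rfl fun i _ => Finset.sum_congr rfl fun j _ => ?_
    ring
  rw [h]
  simp only [Finset.sum_add_distrib]
  rw [sum2_left k (fun i j => _ * _), sum2_left l (fun i j => _ * _),
    sum2_right k (fun i j => _ * _), sum2_right l (fun i j => _ * _)]
  simp only [← Finset.sum_add_distrib]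
  refine Finset.sum_congr rfl fun j _ => ?_
  simp only [ww]
  ring

/-- symmetrisation of triple sums -/
lemma sum_symm {N : ℕ} (F : Fin N → Fin N → Fin N → ℂ)
    (h : ∀ a b c, F a b c + F a c b + F b a c + F b c a + F c a b + F c b a = 0) :
    ∑ a, ∑ b, ∑ c, F a b c = 0 := by
  have e1 : ∑ a, ∑ b, ∑ c, F a c b = ∑ a, ∑ b, ∑ c, F a b c :=
    Finset.sum_congr rfl fun a _ => Finset.sum_comm
  have e2 : ∑ a, ∑ b, ∑ c, F b a c = ∑ a, ∑ b, ∑ c, F a b c := Finset.sum_comm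
  have e3 : ∑ a, ∑ b, ∑ c, F b c a = ∑ a, ∑ b, ∑ c, F a b c := by
    rw [Finset.sum_comm]
    exact Finset.sum_congr rfl fun a _ => Finset.sum_comm
  have e4 : ∑ a, ∑ b, ∑ c, F c a b = ∑ a, ∑ b, ∑ c, F a b c := by
    rw [Finset.sum_congr rfl fun a _ => Finset.sum_comm, Finset.sum_comm]
  have e5 : ∑ a, ∑ b, ∑ c, F c b a = ∑ a, ∑ b, ∑ c, F a b c := by
    rw [Finset.sum_comm, Finset.sum_congr rfl fun a _ => Finset.sum_comm, Finset.sum_comm]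
  have : ∑ a, ∑ b, ∑ c, (F a b c + F a c b + F b a c + F b c a + F c a b + F c b a) = 0 := by
    simp only [h, Finset.sum_const_zero]
  simp only [Finset.sum_add_distrib] at this
  rw [e1, e2, e3, e4, e5] at this
  linear_combination this / 6

lemma T2_total {N : ℕ} (u v : Fin N → ℂ) :
    ∑ k, ∑ l, Lt01 k l * (T2 u v (esgl N k + esgl N l) + T2 u v (esgl N k - esgl N l))
      = 8 * ((N : ℂ) - 2) * ∑ k, ∑ l, Lt01 k l * ww u v k l ^ 2 := by
  have hR : 8 * ((N : ℂ) - 2) * ∑ k, ∑ l, Lt01 k l * ww u v k l ^ 2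
      = ∑ k, ∑ l, ∑ j, (8 * (Lt01 k l * ww u v k l ^ 2)
        - Eq01 j k * (16 * (Lt01 k l * ww u v k l ^ 2))) := by
    simp only [Finset.sum_sub_distrib, sum_Eq01, Finset.sum_const, Finset.card_univ,
      Fintype.card_fin, nsmul_eq_mul, Finset.mul_sum]
    simp only [← Finset.sum_sub_distrib]
    refine Finset.sum_congr rfl fun i _ => Finset.sum_congr rfl fun j _ => ?_
    ring
  rw [hR, ← sub_eq_zero]
  simp only [T2_pm, Finset.mul_sum, ← Finset.sum_sub_distrib]
  apply sum_symm
  intro a b c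
  have tri : ∀ x y : Fin N, (Lt01 x y = 1 ∧ Lt01 y x = 0 ∧ Eq01 x y = 0 ∧ Eq01 y x = 0 ∧ x < y) ∨
      (Lt01 x y = 0 ∧ Lt01 y x = 1 ∧ Eq01 x y = 0 ∧ Eq01 y x = 0 ∧ y < x) ∨ x = y := by
    intro x y
    rcases lt_trichotomy x y with h | h | h
    · left
      simp [Lt01, Eq01, h, h.ne, h.ne', h.le]
    · simp [h]
    · right; left
      simp [Lt01, Eq01, h, h.ne, h.ne', h.le]
  have d1 : ∀ x : Fin N, Lt01 x x = 0 := fun x => by simp [Lt01]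
  have d2 : ∀ x : Fin N, Eq01 x x = 1 := fun x => by simp [Eq01]
  rcases tri a b with ⟨h1, h2, h3, h4, h5⟩ | ⟨h1, h2, h3, h4, h5⟩ | h5 <;>
  rcases tri b c with ⟨g1, g2, g3, g4, g5⟩ | ⟨g1, g2, g3, g4, g5⟩ | g5 <;>
  rcases tri a c with ⟨f1, f2, f3, f4, f5⟩ | ⟨f1, f2, f3, f4, f5⟩ | f5 <;>
  first
  | (exfalso; omega)
  | (simp only [*, ww]; ring)

/-- the form `G^{(2)}`-type sum of the configuration `BC_N⁺(r,s,q)`,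
with the standard pairing `⟨α,β⟩ = Σ αᵢβᵢ` inserted, equals
`4q(r + 8s + 2(N-2)q) Σ_{i<j} (e^i ∧ e^j)²`. -/
theorem BC_G2_identity (N : ℕ) (hN : 1 ≤ N) (r s q : ℂ) (u v : Fin N → ℂ) :
    bcSum N r s q (fun α => bcSum N r s q
      (fun β => (∑ i, α i * β i) * wedge α β u v ^ 2)) =
    4 * q * (r + 8 * s + 2 * ((N : ℂ) - 2) * q) *
      ∑ p ∈ Finset.univ.filter (fun p : Fin N × Fin N => p.1 < p.2),
        (u p.1 * v p.2 - u p.2 * v p.1) ^ 2 := by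
  simp only [inner_eq]
  rw [bcSum_eq]
  simp only [T1_esgl, T1_smul, T2_smul, T2_esgl]
  rw [sum_lt (fun k l => (u k * v l - u l * v k) ^ 2)]
  have hA : ∑ k, ∑ l, Lt01 k l * ((r + 8 * s) * T1 u v (esgl N k + esgl N l)
      + q * T2 u v (esgl N k + esgl N l) + ((r + 8 * s) * T1 u v (esgl N k - esgl N l)
      + q * T2 u v (esgl N k - esgl N l)))
      = (r + 8 * s) * (2 * ∑ k, ∑ l, Lt01 k l * ww u v k l ^ 2)
        + q * ∑ k, ∑ l, Lt01 k l * (T2 u v (esgl N k + esgl N l)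
          + T2 u v (esgl N k - esgl N l)) := by
    simp only [Finset.mul_sum, ← Finset.sum_add_distrib]
    refine Finset.sum_congr rfl fun k _ => Finset.sum_congr rfl fun l _ => ?_
    have := T1_pm u v k l
    simp only [ww]
    linear_combination Lt01 k l * (r + 8 * s) * this
  rw [hA, T2_total]
  simp only [ww, mul_zero, zero_add, ← Finset.mul_sum]
  ring

end
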